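/- Let r ≥ 3 and n ≥ (r-1)(2r+1)/2, let H be an n-vertex T_r-free r-graph with δ⁺_{r-1}(H) > 2n/(2r+1), and let V_1, …, V_r be pairwise disjoint independent sets in H, each of size greater than 2n/(2r+1). Let Z = V(H) \ (V_1 ∪ ⋯ ∪ V_r), let v ∈ Z, and for each i ∈ [r] let L_i be the set of (r-1)-sets e in the link of v (i.e. e ∪ {v} ∈ H) such that |e ∩ V_j| = 1 for every j ∈ [r] \ {i}. Then at most one of the sets L_1, …, L_r is nonempty. -/

import Mathlib

variable {V : Type*} [Fintype V] [DecidableEq V]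

/-- The (r-1)-shadow of an r-graph: all (r-1)-sets contained in some edge. -/
def sshadow (r : ℕ) (H : Finset (Finset V)) : Finset (Finset V) :=
  Finset.univ.filter (fun e => e.card = r - 1 ∧ ∃ E ∈ H, e ⊆ E)

/-- The codegree neighborhood of a set `e`: vertices `v` with `e ∪ {v} ∈ H`. -/
def nbhd (H : Finset (Finset V)) (e : Finset V) : Finset V :=
  Finset.univ.filter (fun v => insert v e ∈ H)

/-- The neighborhood of a vertex. -/
def vnbhd (H : Finset (Finset V)) (v : V) : Finset V :=
  Finset.univ.filter (fun u => u ≠ v ∧ ∃ E ∈ H, u ∈ E ∧ v ∈ E)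

/-- `H` is T_r-free. -/
def IsTrFree (r : ℕ) (H : Finset (Finset V)) : Prop :=
  ¬ ∃ (S W : Finset V) (a b : V),
      S.card = r - 1 ∧ W.card = r - 2 ∧ a ≠ b ∧
      a ∉ S ∧ b ∉ S ∧ a ∉ W ∧ b ∉ W ∧ Disjoint S W ∧
      insert a S ∈ H ∧ insert b S ∈ H ∧ insert a (insert b W) ∈ H

/-- A set of vertices is independent. -/
def IsIndep (H : Finset (Finset V)) (I : Finset V) : Prop :=
  ∀ E ∈ H, (E ∩ I).card ≤ 1

/-- `H` is r-partite. -/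
def IsRPartite (r : ℕ) (H : Finset (Finset V)) : Prop :=
  ∃ P : Fin r → Finset V, (∀ v : V, ∃! i, v ∈ P i) ∧ ∀ i, IsIndep H (P i)

/-- Minimum positive codegree. -/
noncomputable def minPosCodeg (r : ℕ) (H : Finset (Finset V)) : ℕ :=
  sInf {k | ∃ e ∈ sshadow r H, (nbhd H e).card = k}

/-! Minimum positive codegree at least `r` lets one move an edge off any `(r-1)`-set `e` while
keeping its vertices outside `e`. An edge containing two vertices of `N(e)` would thereby complete a
copy of `T_r`, so neighborhoods of `(r-1)`-sets are independent.

Suppose `e ∈ L_i` and `f ∈ L_j` with `i ≠ j`, and put `E = f ∪ {v}`. As `e` meets every part except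
possibly `V_i`, the set `N(e)` lies in `V_i ∪ Z`, so `N(e) ∩ V_i` has at least `|N(e)| - |Z|`
elements. Independence of neighborhoods makes the `r` sets `N(E \ {u})`, `u ∈ E`, pairwise disjoint
and disjoint from `N(e) ∩ V_i`. Hence `|N(e)| + ∑ |V_k| + ∑ |N(E \ {u})| ≤ 2n`, which the lower
bounds on codegrees and parts contradict. -/

open Finset

section Basic

variable {r : ℕ} {H : Finset (Finset V)} {e E : Finset V} {u w : V}

@[simp]
lemma mem_nbhd : w ∈ nbhd H e ↔ insert w e ∈ H := by
  simp only [nbhd, mem_filter_univ]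

lemma mem_sshadow : e ∈ sshadow r H ↔ #e = r - 1 ∧ ∃ E ∈ H, e ⊆ E := by
  simp only [sshadow, mem_filter_univ]

lemma self_mem_nbhd_erase (hE : E ∈ H) (hu : u ∈ E) : u ∈ nbhd H (E.erase u) := by
  rwa [mem_nbhd, insert_erase hu]

lemma mem_sshadow_of_insert_mem (he : #e = r - 1) (hw : insert w e ∈ H) : e ∈ sshadow r H :=
  mem_sshadow.2 ⟨he, _, hw, subset_insert w e⟩

lemma erase_mem_sshadow (hH : ∀ E ∈ H, #E = r) (hE : E ∈ H) (hu : u ∈ E) :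
    E.erase u ∈ sshadow r H :=
  mem_sshadow.2 ⟨by rw [card_erase_of_mem hu, hH E hE], E, hE, erase_subset u E⟩

lemma notMem_of_mem_nbhd (hH : ∀ E ∈ H, #E = r) (he : #e = r - 1) (hw : w ∈ nbhd H e) :
    w ∉ e := by
  intro hwe
  have hcard : #e = r := hH e (by rwa [mem_nbhd, insert_eq_of_mem hwe] at hw)
  have hpos : 0 < #e := card_pos.2 ⟨w, hwe⟩
  omega

lemma notMem_erase_of_mem_nbhd (hH : ∀ E ∈ H, #E = r) (hE : E ∈ H) (hu : u ∈ E)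
    (hw : w ∈ nbhd H (E.erase u)) : w ∉ E.erase u :=
  notMem_of_mem_nbhd hH (mem_sshadow.1 (erase_mem_sshadow hH hE hu)).1 hw

end Basic

section IsIndep

lemma IsIndep.eq_of_mem {α : Type*} [DecidableEq α] {H : Finset (Finset α)} {E I : Finset α}
    {a b : α} (hI : IsIndep H I) (hE : E ∈ H) (haE : a ∈ E) (hbE : b ∈ E) (haI : a ∈ I)
    (hbI : b ∈ I) : a = b :=
  card_le_one.1 (hI E hE) a (mem_inter.2 ⟨haE, haI⟩) b (mem_inter.2 ⟨hbE, hbI⟩)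

variable {r : ℕ} {H : Finset (Finset V)} {e I : Finset V}

lemma IsIndep.disjoint_nbhd (hI : IsIndep H I) (hH : ∀ E ∈ H, #E = r) (he : #e = r - 1)
    (heI : (e ∩ I).Nonempty) : Disjoint (nbhd H e) I := by
  obtain ⟨x, hx⟩ := heI
  obtain ⟨hxe, hxI⟩ := mem_inter.1 hx
  refine disjoint_left.2 fun w hw hwI ↦ notMem_of_mem_nbhd hH he hw ?_
  have hwx : w = x :=
    hI.eq_of_mem (mem_nbhd.1 hw) (mem_insert_self w e) (mem_insert_of_mem hxe) hwI hxI
  rwa [hwx]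

end IsIndep

section TrFree

variable {r : ℕ} {H : Finset (Finset V)}

lemma exists_edge_disjoint_of_card_lt_card_nbhd (hH : ∀ E ∈ H, #E = r) {e : Finset V}
    (hdeg : ∀ f ∈ sshadow r H, #e < #(nbhd H f)) {E : Finset V} (hE : E ∈ H) :
    ∃ E' ∈ H, E \ e ⊆ E' ∧ Disjoint E' e := by
  induction hk : #(E ∩ e) generalizing E with
  | zero => exact ⟨E, hE, sdiff_subset, disjoint_iff_inter_eq_empty.2 (card_eq_zero.1 hk)⟩
  | succ k ih =>
    obtain ⟨w, hw⟩ : (E ∩ e).Nonempty := card_pos.1 (by omega)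
    obtain ⟨hwE, hwe⟩ := mem_inter.1 hw
    obtain ⟨z, hz, hze⟩ :=
      exists_mem_notMem_of_card_lt_card (hdeg _ (erase_mem_sshadow hH hE hwE))
    have hinter : #(insert z (E.erase w) ∩ e) = k := by
      rw [insert_inter_of_notMem hze, erase_inter, card_erase_of_mem hw, hk, Nat.add_sub_cancel]
    obtain ⟨E', hE', hsub, hdisj⟩ := ih (mem_nbhd.1 hz) hinter
    have hkeep : E \ e ⊆ insert z (E.erase w) \ e := by grind
    exact ⟨E', hE', hkeep.trans hsub, hdisj⟩

lemma IsTrFree.eq_of_mem_nbhd_of_disjoint (hfree : IsTrFree r H) (hH : ∀ E ∈ H, #E = r)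
    {e E : Finset V} (he : #e = r - 1) (hE : E ∈ H) (hEe : Disjoint E e) {a b : V}
    (haE : a ∈ E) (hbE : b ∈ E) (ha : a ∈ nbhd H e) (hb : b ∈ nbhd H e) : a = b := by
  by_contra hab
  have hbEa : b ∈ E.erase a := mem_erase.2 ⟨Ne.symm hab, hbE⟩
  have hcard : #((E.erase a).erase b) = r - 2 := by
    rw [card_erase_of_mem hbEa, card_erase_of_mem haE, hH E hE, Nat.sub_sub]
  have hedge : insert a (insert b ((E.erase a).erase b)) ∈ H := by
    rwa [insert_erase hbEa, insert_erase haE]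
  have hdisj : Disjoint e ((E.erase a).erase b) :=
    (hEe.mono_left ((erase_subset _ _).trans (erase_subset _ _))).symm
  exact hfree ⟨e, (E.erase a).erase b, a, b, he, hcard, hab, disjoint_left.1 hEe haE,
    disjoint_left.1 hEe hbE, by simp, by simp, hdisj, mem_nbhd.1 ha, mem_nbhd.1 hb, hedge⟩

lemma IsTrFree.isIndep_nbhd (hfree : IsTrFree r H) (hH : ∀ E ∈ H, #E = r)
    (hdeg : ∀ f ∈ sshadow r H, r - 1 < #(nbhd H f)) {e : Finset V} (he : #e = r - 1) :
    IsIndep H (nbhd H e) := by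
  intro E hE
  obtain ⟨E', hE', hsub, hdisj⟩ :=
    exists_edge_disjoint_of_card_lt_card_nbhd hH (e := e) (by rwa [he]) hE
  refine card_le_one.2 fun a ha b hb ↦ ?_
  obtain ⟨haE, ha⟩ := mem_inter.1 ha
  obtain ⟨hbE, hb⟩ := mem_inter.1 hb
  have haE' : a ∈ E' := hsub (mem_sdiff.2 ⟨haE, notMem_of_mem_nbhd hH he ha⟩)
  have hbE' : b ∈ E' := hsub (mem_sdiff.2 ⟨hbE, notMem_of_mem_nbhd hH he hb⟩)
  exact hfree.eq_of_mem_nbhd_of_disjoint hH he hE' hdisj haE' hbE' ha hb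

end TrFree

section Counting

variable {r : ℕ} {H : Finset (Finset V)} {e E I : Finset V} {v y : V}

lemma pairwiseDisjoint_nbhd_erase (hH : ∀ E ∈ H, #E = r)
    (hN : ∀ f ∈ sshadow r H, IsIndep H (nbhd H f)) (hE : E ∈ H) :
    (E : Set V).PairwiseDisjoint fun u ↦ nbhd H (E.erase u) := by
  intro u hu x hx hux
  have hxu : x ∈ E.erase u := mem_erase.2 ⟨hux.symm, hx⟩
  refine disjoint_left.2 fun w hwu hwx ↦ notMem_erase_of_mem_nbhd hH hE hu hwu ?_
  have hwx' : w = x :=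
    (hN _ (erase_mem_sshadow hH hE hx)).eq_of_mem (mem_nbhd.1 hwu) (mem_insert_self w _)
      (mem_insert_of_mem hxu) hwx (self_mem_nbhd_erase hE hx)
  rwa [hwx']

lemma disjoint_nbhd_inter_nbhd_erase (hH : ∀ E ∈ H, #E = r) (he : IsIndep H (nbhd H e))
    (hI : IsIndep H I) (hE : E ∈ H) (hvE : v ∈ E) (hve : v ∈ nbhd H e) (hyE : y ∈ E)
    (hyI : y ∈ I) (hvy : v ≠ y) {u : V} (hu : u ∈ E) :
    Disjoint (nbhd H e ∩ I) (nbhd H (E.erase u)) := by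
  refine disjoint_left.2 fun x hx hxu ↦ ?_
  obtain ⟨hxe, hxI⟩ := mem_inter.1 hx
  have hedge : insert x (E.erase u) ∈ H := mem_nbhd.1 hxu
  by_cases huy : u = y
  · have hxv : x = v :=
      he.eq_of_mem hedge (mem_insert_self x _)
        (mem_insert_of_mem (mem_erase.2 ⟨huy ▸ hvy, hvE⟩)) hxe hve
    exact hvy (hI.eq_of_mem hE hvE hyE (hxv ▸ hxI) hyI)
  · have hyu : y ∈ E.erase u := mem_erase.2 ⟨Ne.symm huy, hyE⟩
    have hxy : x = y :=
      hI.eq_of_mem hedge (mem_insert_self x _) (mem_insert_of_mem hyu) hxI hyI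
    exact notMem_erase_of_mem_nbhd hH hE hu hxu (hxy ▸ hyu)

lemma card_nbhd_inter_add_sum_card_nbhd_erase_le (hH : ∀ E ∈ H, #E = r)
    (hN : ∀ f ∈ sshadow r H, IsIndep H (nbhd H f)) (he : e ∈ sshadow r H)
    (hI : IsIndep H I) (hE : E ∈ H) (hvE : v ∈ E) (hve : v ∈ nbhd H e) (hyE : y ∈ E)
    (hyI : y ∈ I) (hvy : v ≠ y) :
    #(nbhd H e ∩ I) + ∑ u ∈ E, #(nbhd H (E.erase u)) ≤ Fintype.card V := by
  have hdisj : Disjoint (nbhd H e ∩ I) (E.biUnion fun u ↦ nbhd H (E.erase u)) :=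
    (disjoint_biUnion_right _ _ _).2 fun _ hu ↦
      disjoint_nbhd_inter_nbhd_erase hH (hN e he) hI hE hvE hve hyE hyI hvy hu
  rw [← card_biUnion (pairwiseDisjoint_nbhd_erase hH hN hE), ← card_union_of_disjoint hdisj]
  exact card_le_univ _

lemma card_nbhd_add_sum_card_le {ι : Type*} [Fintype ι] (hH : ∀ E ∈ H, #E = r)
    (he : #e = r - 1) {P : ι → Finset V} (hdisj : Pairwise fun k l ↦ Disjoint (P k) (P l))
    (hindep : ∀ k, IsIndep H (P k)) {i : ι} (hmeet : ∀ k ≠ i, (e ∩ P k).Nonempty) :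
    #(nbhd H e) + ∑ k, #(P k) ≤ #(nbhd H e ∩ P i) + Fintype.card V := by
  have hinter : nbhd H e ∩ univ.biUnion P ⊆ nbhd H e ∩ P i := by
    refine fun w hw ↦ ?_
    obtain ⟨hwe, hwP⟩ := mem_inter.1 hw
    obtain ⟨k, -, hwk⟩ := mem_biUnion.1 hwP
    have hki : k = i := by
      by_contra hki
      exact disjoint_left.1 ((hindep k).disjoint_nbhd hH he (hmeet k hki)) hwe hwk
    exact mem_inter.2 ⟨hwe, hki ▸ hwk⟩
  calc #(nbhd H e) + ∑ k, #(P k)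
      = #(nbhd H e) + #(univ.biUnion P) := by
        rw [card_biUnion fun k _ l _ hkl ↦ hdisj hkl]
    _ = #(nbhd H e ∩ univ.biUnion P) + #(nbhd H e ∪ univ.biUnion P) :=
        (card_inter_add_card_union _ _).symm
    _ ≤ #(nbhd H e ∩ P i) + Fintype.card V :=
        Nat.add_le_add (card_le_card hinter) (card_le_univ _)

lemma card_nbhd_add_sum_card_add_sum_card_nbhd_erase_le {ι : Type*} [Fintype ι]
    (hH : ∀ E ∈ H, #E = r) (hN : ∀ f ∈ sshadow r H, IsIndep H (nbhd H f)) {P : ι → Finset V}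
    (hdisj : Pairwise fun k l ↦ Disjoint (P k) (P l)) (hindep : ∀ k, IsIndep H (P k)) {i : ι}
    (he : e ∈ sshadow r H) (hmeet : ∀ k ≠ i, (e ∩ P k).Nonempty) (hve : v ∈ nbhd H e)
    (hE : E ∈ H) (hvE : v ∈ E) (hEi : (E.erase v ∩ P i).Nonempty) :
    #(nbhd H e) + ∑ k, #(P k) + ∑ u ∈ E, #(nbhd H (E.erase u)) ≤ 2 * Fintype.card V := by
  obtain ⟨y, hy⟩ := hEi
  obtain ⟨hyE, hyi⟩ := mem_inter.1 hy
  have hparts := card_nbhd_add_sum_card_le hH (mem_sshadow.1 he).1 hdisj hindep hmeet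
  have hpack := card_nbhd_inter_add_sum_card_nbhd_erase_le hH hN he (hindep i) hE hvE hve
    (mem_of_mem_erase hyE) hyi (ne_of_mem_erase hyE).symm
  omega

end Counting

theorem stmt8_general {r : ℕ} {H : Finset (Finset V)} (hH : ∀ E ∈ H, #E = r)
    (hfree : IsTrFree r H) {d s : ℝ} (hd : (r : ℝ) - 1 ≤ d)
    (hdeg : ∀ e ∈ sshadow r H, d < #(nbhd H e)) (P : Fin r → Finset V)
    (hdisj : Pairwise fun i j ↦ Disjoint (P i) (P j)) (hindep : ∀ i, IsIndep H (P i))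
    (hsize : ∀ i, s ≤ #(P i)) (hds : 2 * (Fintype.card V : ℝ) ≤ (r + 1) * d + r * s) {v : V}
    (L : Fin r → Finset (Finset V))
    (hL : ∀ i, L i = univ.filter fun e : Finset V ↦
      #e = r - 1 ∧ insert v e ∈ H ∧ ∀ j, j ≠ i → #(e ∩ P j) = 1) :
    ∀ i j : Fin r, (L i).Nonempty → (L j).Nonempty → i = j := by
  rintro i j ⟨e, he⟩ ⟨f, hf⟩
  by_contra hij
  simp only [hL, mem_filter_univ] at he hf
  obtain ⟨he_card, hve, he_meet⟩ := he
  obtain ⟨hf_card, hvf, hf_meet⟩ := hf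
  have hcodeg : ∀ g ∈ sshadow r H, r - 1 < #(nbhd H g) := fun g hg ↦ by
    have hr : (r : ℝ) < #(nbhd H g) + 1 := by linarith [hdeg g hg]
    have hr' : r < #(nbhd H g) + 1 := by exact_mod_cast hr
    have hr_pos := i.pos
    omega
  have hN : ∀ g ∈ sshadow r H, IsIndep H (nbhd H g) := fun g hg ↦
    hfree.isIndep_nbhd hH hcodeg (mem_sshadow.1 hg).1
  have hfi : ((insert v f).erase v ∩ P i).Nonempty := by
    rw [erase_insert (notMem_of_mem_nbhd hH hf_card (mem_nbhd.2 hvf))]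
    exact card_pos.1 (hf_meet i hij ▸ one_pos)
  have he_shadow := mem_sshadow_of_insert_mem he_card hve
  have hcount := card_nbhd_add_sum_card_add_sum_card_nbhd_erase_le hH hN hdisj hindep he_shadow
    (fun k hk ↦ card_pos.1 (he_meet k hk ▸ one_pos)) (mem_nbhd.2 hve) hvf (mem_insert_self v f) hfi
  have hparts : r * s ≤ ∑ k, (#(P k) : ℝ) := by
    simpa using card_nsmul_le_sum univ (fun k ↦ (#(P k) : ℝ)) s fun k _ ↦ hsize k
  have hcodegs : r * d ≤ ∑ u ∈ insert v f, (#(nbhd H ((insert v f).erase u)) : ℝ) := by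
    simpa only [hH _ hvf, nsmul_eq_mul] using card_nsmul_le_sum (insert v f) _ d
      fun u hu ↦ (hdeg _ (erase_mem_sshadow hH hvf hu)).le
  have hcount' : (#(nbhd H e) : ℝ) + ∑ k, (#(P k) : ℝ)
      + ∑ u ∈ insert v f, (#(nbhd H ((insert v f).erase u)) : ℝ) ≤ 2 * Fintype.card V := by
    exact_mod_cast hcount
  linarith [hdeg e he_shadow]

/-- Setting of the proof of the main theorem: `V_1, …, V_r` are pairwise disjoint independent
sets of size greater than `2n/(2r+1)` each, `v` is a vertex outside all of them, and for each
`i`, `L i` is the set of `(r-1)`-sets `e` in the link of `v` with `|e ∩ V_j| = 1` for all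
`j ≠ i`. Then at most one of the sets `L 1, …, L r` is nonempty. -/
theorem stmt8 {V : Type*} [Fintype V] [DecidableEq V] {r n : ℕ} (hr : 3 ≤ r)
    (hn : ((r : ℝ) - 1) * (2 * r + 1) / 2 ≤ n) (hV : Fintype.card V = n)
    {H : Finset (Finset V)} (hH : ∀ E ∈ H, E.card = r)
    (hfree : IsTrFree r H)
    (hdeg : ∀ e ∈ sshadow r H, 2 * (n : ℝ) / (2 * r + 1) < ((nbhd H e).card : ℝ))
    (P : Fin r → Finset V)
    (hdisj : ∀ i j, i ≠ j → Disjoint (P i) (P j))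
    (hindep : ∀ i, IsIndep H (P i))
    (hsize : ∀ i, 2 * (n : ℝ) / (2 * r + 1) < ((P i).card : ℝ))
    {v : V} (hv : ∀ i, v ∉ P i)
    (L : Fin r → Finset (Finset V))
    (hL : ∀ i, L i = Finset.univ.filter (fun e : Finset V =>
      e.card = r - 1 ∧ insert v e ∈ H ∧ ∀ j, j ≠ i → (e ∩ P j).card = 1)) :
    ∀ i j : Fin r, (L i).Nonempty → (L j).Nonempty → i = j := by
  have hd : (r : ℝ) - 1 ≤ 2 * n / (2 * r + 1) := (le_div_iff₀ (by positivity)).2 (by linarith)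
  have hds : 2 * (n : ℝ) = (r + 1) * (2 * n / (2 * r + 1)) + r * (2 * n / (2 * r + 1)) := by
    field_simp; ring
  exact stmt8_general hH hfree hd hdeg P hdisj hindep (fun i ↦ (hsize i).le) (hV ▸ hds.le) L hL
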